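/- For d ∈ ℕ divisible by 100 and t ∈ [1/(2√d), 1/2], let 𝒫_{d,t} be the class of discrete distributions (p_0, p_1, …, p_d) on the finite set {0,1,…,d} with p_i ≥ 0, Σ_{i=0}^d p_i = 1, and p_0 = t. There exist absolute constants c, C > 0 such that for all such d, t and all integers n ≥ 1: (i) if n ≥ C/t then ε*(𝒫_{d,t}, n, 1) ≤ 0.1; and (ii) if n ≤ c/t then ε*(𝒫_{d,t}, n, 1) ≥ 1/2. In particular an (n, n+1) sample amplification with error 0.1 is possible if and only if n = Θ(1/t). -/

import Mathlib

open MeasureTheory ProbabilityTheory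
open scoped ENNReal NNReal BigOperators

/-- Total variation distance between two measures: `sup_A |P(A) - Q(A)|`. -/
noncomputable def tvDist {X : Type*} [MeasurableSpace X] (μ ν : Measure X) : ℝ :=
  ⨆ A : {s : Set X // MeasurableSet s}, |(μ A).toReal - (ν A).toReal|

/-- Minimax sample amplification error `ε*(𝒫, n, m)` for the family `(P θ)_θ`. -/
noncomputable def ampErr {X Θ : Type*} [MeasurableSpace X] (P : Θ → Measure X)
    (n m : ℕ) : ℝ :=
  ⨅ T : {T : Kernel (Fin n → X) (Fin (n + m) → X) // IsMarkovKernel T},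
    ⨆ θ : Θ, tvDist (Measure.pi fun _ : Fin (n + m) => P θ)
      ((Measure.pi fun _ : Fin n => P θ).bind T.1)

/-- The discrete distribution on `{0, 1, …, d}` with probability vector `p`. -/
noncomputable def discreteMeasure {d : ℕ} (p : Fin (d + 1) → ℝ≥0) :
    Measure (Fin (d + 1)) :=
  ∑ i : Fin (d + 1), (p i : ℝ≥0∞) • Measure.dirac i

/-- The class `𝒫_{d,t}` of discrete distributions `(p_0, …, p_d)` on `{0, …, d}`
with `p_0 = t` known. -/
def discreteClassTop (d : ℕ) (t : ℝ≥0) : Type :=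
  {p : Fin (d + 1) → ℝ≥0 // (∑ i, p i) = 1 ∧ p 0 = t}

/-!
For the upper bound, insert the symbol `0` at a random position of the sample. As `0` has known
mass `t`, the resulting law has density `N / ((n + 1) t)` with respect to the true law of `n + 1`
samples, where `N` counts the zeros; so the error is at most the standard deviation of this
density, which is at most `((n + 1) t) ^ (-1/2)`.

For the lower bound, let every nonzero label be displayed through one of `100` symbols, according
to a hidden codebook. Shifting the codes of all labels missing from the sample leaves the sample
unchanged, but makes the sets of `n + 1` correctly encoded, distinct nonzero labels pairwise
disjoint; so for some codebook an amplifier hits its set with probability at most `1 / 100`. A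
true `(n + 1)`-sample lies there with probability close to `1` when `n t` and `n ^ 2 / d` are small.
-/

section TotalVariation

variable {X : Type*} [MeasurableSpace X] {μ ν : Measure X}

theorem tvDist_nonneg (μ ν : Measure X) : 0 ≤ tvDist μ ν :=
  Real.iSup_nonneg fun _ => abs_nonneg _

theorem tvDist_le {ε : ℝ} (h : ∀ A, MeasurableSet A → |μ.real A - ν.real A| ≤ ε) :
    tvDist μ ν ≤ ε :=
  ciSup_le fun A => h A A.2

theorem abs_measureReal_sub_le_one [IsProbabilityMeasure μ] [IsProbabilityMeasure ν]
    (A : Set X) : |μ.real A - ν.real A| ≤ 1 :=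
  abs_sub_le_of_nonneg_of_le measureReal_nonneg measureReal_le_one measureReal_nonneg
    measureReal_le_one

theorem tvDist_le_one [IsProbabilityMeasure μ] [IsProbabilityMeasure ν] : tvDist μ ν ≤ 1 :=
  tvDist_le fun A _ => abs_measureReal_sub_le_one A

theorem measureReal_sub_le_tvDist [IsProbabilityMeasure μ] [IsProbabilityMeasure ν]
    {A : Set X} (hA : MeasurableSet A) : μ.real A - ν.real A ≤ tvDist μ ν :=
  (le_abs_self _).trans <|
    le_ciSup (f := fun A : {s : Set X // MeasurableSet s} => |(μ A).toReal - (ν A).toReal|)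
      ⟨1, by rintro _ ⟨B, rfl⟩; exact abs_measureReal_sub_le_one B.1⟩ ⟨A, hA⟩

theorem sq_integral_le_integral_sq [IsProbabilityMeasure μ] {f : X → ℝ} (hf : MemLp f 2 μ) :
    (∫ x, f x ∂μ) ^ 2 ≤ ∫ x, f x ^ 2 ∂μ := by
  have h := variance_nonneg f μ
  rwa [variance_eq_sub hf, sub_nonneg] at h

theorem tvDist_le_sqrt_variance_of_density [IsProbabilityMeasure μ] [IsProbabilityMeasure ν]
    {f : X → ℝ} (hf : MemLp f 2 μ)
    (hν : ∀ A, MeasurableSet A → ν.real A = ∫ x in A, f x ∂μ) :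
    tvDist μ ν ≤ √(Var[f; μ]) := by
  have hmean : ∫ x, f x ∂μ = 1 := by simpa using (hν Set.univ .univ).symm
  have hsub : MemLp (fun x => 1 - f x) 2 μ := (memLp_const 1).sub hf
  refine tvDist_le fun A hA => Real.abs_le_sqrt ?_
  calc (μ.real A - ν.real A) ^ 2 = (∫ x, A.indicator (fun x => 1 - f x) x ∂μ) ^ 2 := by
        rw [integral_indicator hA, integral_sub (integrable_const _)
          (hf.integrable one_le_two).integrableOn, hν A hA]
        simp
    _ ≤ ∫ x, A.indicator (fun x => 1 - f x) x ^ 2 ∂μ :=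
        sq_integral_le_integral_sq (hsub.indicator hA)
    _ ≤ ∫ x, (f x - 1) ^ 2 ∂μ := by
        refine integral_mono (hsub.indicator hA).integrable_sq
          (hf.sub (memLp_const 1)).integrable_sq fun x => ?_
        by_cases hx : x ∈ A
        · simp only [Set.indicator_of_mem hx, sub_sq_comm (1 : ℝ), le_refl]
        · simpa [hx] using sq_nonneg (f x - 1)
    _ = Var[f; μ] := by rw [variance_eq_integral hf.aemeasurable, hmean]

end TotalVariation

section AmplificationError

variable {X Θ : Type*} [MeasurableSpace X] {P : Θ → Measure X} {n m : ℕ} {ε : ℝ}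

theorem ampErr_le (hε : 0 ≤ ε) (T : Kernel (Fin n → X) (Fin (n + m) → X)) [IsMarkovKernel T]
    (h : ∀ θ, tvDist (Measure.pi fun _ : Fin (n + m) => P θ)
      ((Measure.pi fun _ : Fin n => P θ).bind T) ≤ ε) :
    ampErr P n m ≤ ε := by
  refine ciInf_le_of_le ⟨0, ?_⟩ ⟨T, ‹_›⟩ (Real.iSup_le h hε)
  rintro _ ⟨S, rfl⟩
  exact Real.iSup_nonneg fun _ => tvDist_nonneg _ _

theorem le_ampErr [Nonempty X] [∀ θ, IsProbabilityMeasure (P θ)]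
    (h : ∀ T : Kernel (Fin n → X) (Fin (n + m) → X), IsMarkovKernel T →
      ∃ θ, ε ≤ tvDist (Measure.pi fun _ : Fin (n + m) => P θ)
        ((Measure.pi fun _ : Fin n => P θ).bind T)) :
    ε ≤ ampErr P n m := by
  have : Nonempty {T : Kernel (Fin n → X) (Fin (n + m) → X) // IsMarkovKernel T} :=
    ⟨⟨Kernel.const _ (Measure.dirac (Classical.arbitrary _)), inferInstance⟩⟩
  refine le_ciInf fun ⟨T, hT⟩ => ?_
  obtain ⟨θ, hθ⟩ := h T hT
  exact le_ciSup_of_le ⟨1, by rintro _ ⟨θ, rfl⟩; exact tvDist_le_one⟩ θ hθ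

end AmplificationError

section RandomInsertion

variable {X : Type*} [MeasurableSpace X] {n : ℕ}

theorem measurable_insertNth (j : Fin (n + 1)) (a : X) :
    Measurable fun x : Fin n → X => j.insertNth (α := fun _ => X) a x :=
  (MeasurableEquiv.piFinSuccAbove (fun _ => X) j).symm.measurable.comp
    (measurable_const.prodMk measurable_id)

/-- The amplification procedure that inserts the symbol `a` into an `n`-letter word, at a uniformly
random one of the `n + 1` possible positions. -/
noncomputable def insertKernel (n : ℕ) (a : X) : Kernel (Fin n → X) (Fin (n + 1) → X) where
  toFun x := (n + 1 : ℝ≥0∞)⁻¹ • ∑ j : Fin (n + 1), Measure.dirac (j.insertNth a x)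
  measurable' := by
    refine Measure.measurable_of_measurable_coe _ fun A hA => ?_
    simp only [Measure.smul_apply, Measure.coe_finsetSum, Finset.sum_apply, smul_eq_mul]
    exact (Finset.measurable_sum _ fun j _ => (Measure.measurable_coe hA).comp <|
      Measure.measurable_dirac.comp (measurable_insertNth j a)).const_mul _

theorem insertKernel_apply (n : ℕ) (a : X) (x : Fin n → X) :
    insertKernel n a x =
      (n + 1 : ℝ≥0∞)⁻¹ • ∑ j : Fin (n + 1), Measure.dirac (j.insertNth a x) := rfl

instance (n : ℕ) (a : X) : IsMarkovKernel (insertKernel n a) where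
  isProbabilityMeasure x := ⟨by
    simpa [insertKernel_apply] using ENNReal.inv_mul_cancel (a := n + 1) (by simp) (by finiteness)⟩

theorem bind_insertKernel (μ : Measure (Fin n → X)) (a : X) :
    μ.bind (insertKernel n a) =
      (n + 1 : ℝ≥0∞)⁻¹ • ∑ j : Fin (n + 1), μ.map fun x => j.insertNth a x := by
  ext A hA
  have hmeas (j : Fin (n + 1)) := measurable_insertNth j a
  have hpre (j : Fin (n + 1)) (x : Fin n → X) :
      A.indicator (1 : (Fin (n + 1) → X) → ℝ≥0∞) (j.insertNth a x) =
        ((fun x => j.insertNth a x) ⁻¹' A).indicator 1 x := rfl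
  rw [Measure.bind_apply hA (Kernel.aemeasurable _)]
  simp only [insertKernel_apply, Measure.smul_apply, Measure.coe_finsetSum, Finset.sum_apply,
    smul_eq_mul, Measure.dirac_apply' _ hA, Measure.map_apply (hmeas _) hA, hpre]
  rw [lintegral_const_mul _ (Finset.measurable_sum _ fun j _ =>
    measurable_one.indicator (hmeas j hA)), lintegral_finsetSum _ fun j _ =>
    measurable_one.indicator (hmeas j hA)]
  simp only [lintegral_indicator_one (hmeas _ hA)]

-- Inserting an atom `a` at position `j` amounts to conditioning the longer sample on `y j = a`.
theorem mul_pi_map_insertNth (μ : Measure X) [SigmaFinite μ] (a : X) (j : Fin (n + 1)) :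
    μ {a} • (Measure.pi fun _ : Fin n => μ).map (fun x => j.insertNth a x) =
      (Measure.pi fun _ : Fin (n + 1) => μ).restrict {y | y j = a} := by
  ext A hA
  have hset : MeasurableEquiv.piFinSuccAbove (fun _ => X) j ⁻¹'
      ({a} ×ˢ ((fun x => j.insertNth (α := fun _ => X) a x) ⁻¹' A)) = A ∩ {y | y j = a} := by
    ext y
    simp only [MeasurableEquiv.piFinSuccAbove_apply, Set.mem_preimage, Set.mem_prod,
      Set.mem_singleton_iff, Fin.insertNthEquiv_symm_apply, Set.mem_inter_iff,
      Set.mem_ofPred_eq, and_comm (a := y j = a)]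
    exact and_congr_left fun h => by rw [← h, Fin.insertNth_self_removeNth]
  rw [Measure.restrict_apply hA, ← hset, (measurePreserving_piFinSuccAbove
    (fun _ : Fin (n + 1) => μ) j).measure_preimage_equiv, Measure.prod_prod]
  simp [Measure.map_apply (measurable_insertNth j a) hA]

theorem measureReal_mul_pi_map_insertNth_real (μ : Measure X) [IsProbabilityMeasure μ] (a : X)
    (j : Fin (n + 1)) {A : Set (Fin (n + 1) → X)} (hA : MeasurableSet A) :
    μ.real {a} * ((Measure.pi fun _ : Fin n => μ).map fun x => j.insertNth a x).real A =
      (Measure.pi fun _ : Fin (n + 1) => μ).real (A ∩ {y | y j = a}) := by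
  have h := congrArg (fun ν => ν.real A) (mul_pi_map_insertNth μ a j)
  rwa [measureReal_ennreal_smul_apply, measureReal_restrict_apply hA] at h

/-- The number of occurrences of the letter `a` in the word `y`, as a real-valued statistic. -/
noncomputable def letterCount {k : ℕ} (a : X) (y : Fin k → X) : ℝ :=
  ∑ i, ({a} : Set X).indicator 1 (y i)

variable [MeasurableSingletonClass X]

theorem memLp_indicator_singleton (μ : Measure X) [IsFiniteMeasure μ] (a : X) :
    MemLp (({a} : Set X).indicator (1 : X → ℝ)) 2 μ :=
  memLp_indicator_const 2 (measurableSet_singleton a) 1 (Or.inr (measure_ne_top _ _))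

theorem memLp_indicator_singleton_eval {k : ℕ} (μ : Measure X) [IsProbabilityMeasure μ] (a : X)
    (i : Fin k) :
    MemLp (fun y : Fin k → X => ({a} : Set X).indicator (1 : X → ℝ) (y i)) 2
      (Measure.pi fun _ => μ) :=
  (memLp_indicator_singleton μ a).comp_measurePreserving
    (measurePreserving_eval (fun _ : Fin k => μ) i)

theorem memLp_letterCount {k : ℕ} (μ : Measure X) [IsProbabilityMeasure μ] (a : X) :
    MemLp (letterCount (k := k) a) 2 (Measure.pi fun _ => μ) :=
  memLp_finsetSum _ fun i _ => memLp_indicator_singleton_eval μ a i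

theorem setIntegral_letterCount {k : ℕ} (μ : Measure X) [IsProbabilityMeasure μ] (a : X)
    (A : Set (Fin k → X)) :
    ∫ y in A, letterCount a y ∂(Measure.pi fun _ => μ) =
      ∑ i, (Measure.pi fun _ => μ).real (A ∩ {y | y i = a}) := by
  have hset (i : Fin k) : MeasurableSet {y : Fin k → X | y i = a} :=
    (measurableSet_singleton a).preimage (measurable_pi_apply i)
  simp only [letterCount]
  rw [integral_finsetSum _ fun i _ =>
    ((memLp_indicator_singleton_eval μ a i).integrable one_le_two).integrableOn]
  refine Finset.sum_congr rfl fun i _ => ?_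
  calc _ = ∫ y in A, {y | y i = a}.indicator 1 y ∂(Measure.pi fun _ => μ) := rfl
    _ = _ := by
      rw [integral_indicator_one (hset i), measureReal_restrict_apply (hset i), Set.inter_comm]

theorem variance_letterCount_le {k : ℕ} (μ : Measure X) [IsProbabilityMeasure μ] (a : X) :
    Var[letterCount (k := k) a; Measure.pi fun _ => μ] ≤ k * μ.real {a} := by
  have hletter : Var[({a} : Set X).indicator 1; μ] ≤ μ.real {a} := by
    refine (variance_le_expectation_sq
      (memLp_indicator_singleton μ a).aestronglyMeasurable).trans_eq ?_
    rw [← integral_indicator_one (measurableSet_singleton a)]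
    refine integral_congr_ae (.of_forall fun x => ?_)
    by_cases hx : x = a <;> simp [hx]
  have hcount : letterCount (k := k) a =
      ∑ i, fun y : Fin k → X => ({a} : Set X).indicator (1 : X → ℝ) (y i) := by
    ext y; simp [letterCount]
  rw [hcount, variance_sum_pi fun _ => memLp_indicator_singleton μ a]
  simpa using mul_le_mul_of_nonneg_left hletter k.cast_nonneg

theorem bind_insertKernel_pi_real {μ : Measure X} [IsProbabilityMeasure μ] {a : X}
    (ha : μ.real {a} ≠ 0) {A : Set (Fin (n + 1) → X)} (hA : MeasurableSet A) :
    ((Measure.pi fun _ : Fin n => μ).bind (insertKernel n a)).real A =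
      ∫ y in A, ((n + 1) * μ.real {a})⁻¹ * letterCount a y ∂(Measure.pi fun _ => μ) := by
  have (j : Fin (n + 1)) : IsProbabilityMeasure
      ((Measure.pi fun _ : Fin n => μ).map fun x => j.insertNth (α := fun _ => X) a x) :=
    Measure.isProbabilityMeasure_map (measurable_insertNth j a).aemeasurable
  have hbind : ((Measure.pi fun _ : Fin n => μ).bind (insertKernel n a)).real A =
      (n + 1 : ℝ)⁻¹ * ∑ j : Fin (n + 1),
        ((Measure.pi fun _ : Fin n => μ).map fun x => j.insertNth a x).real A := by
    simp [bind_insertKernel, Measure.real, ENNReal.toReal_sum, ENNReal.toReal_add]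
  rw [hbind, integral_const_mul, setIntegral_letterCount μ a A]
  simp only [← measureReal_mul_pi_map_insertNth_real μ a _ hA, ← Finset.mul_sum]
  rw [mul_inv, mul_assoc, inv_mul_cancel_left₀ ha]

theorem tvDist_bind_insertKernel_le {μ : Measure X} [IsProbabilityMeasure μ] {a : X}
    (ha : μ.real {a} ≠ 0) :
    tvDist (Measure.pi fun _ : Fin (n + 1) => μ)
      ((Measure.pi fun _ : Fin n => μ).bind (insertKernel n a)) ≤
        √((n + 1) * μ.real {a})⁻¹ := by
  have : 0 < μ.real {a} := measureReal_nonneg.lt_of_ne' ha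
  refine (tvDist_le_sqrt_variance_of_density ((memLp_letterCount μ a).const_mul _)
    fun A hA => bind_insertKernel_pi_real ha hA).trans (Real.sqrt_le_sqrt ?_)
  rw [variance_const_mul]
  calc (((n + 1) * μ.real {a})⁻¹ ^ 2 * _ : ℝ)
      ≤ ((n + 1) * μ.real {a})⁻¹ ^ 2 * ((n + 1 : ℕ) * μ.real {a}) := by
        gcongr
        exact variance_letterCount_le μ a
    _ = _ := by push_cast; field_simp

theorem ampErr_one_le_of_atom {Θ : Type*} {P : Θ → Measure X} [∀ θ, IsProbabilityMeasure (P θ)]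
    {a : X} {t : ℝ} (ht : 0 < t) (hP : ∀ θ, t ≤ (P θ).real {a}) :
    ampErr P n 1 ≤ √((n + 1) * t)⁻¹ := by
  refine ampErr_le (Real.sqrt_nonneg _) (insertKernel n a) fun θ =>
    (tvDist_bind_insertKernel_le (ht.trans_le (hP θ)).ne').trans (Real.sqrt_le_sqrt ?_)
  gcongr
  exact hP θ

end RandomInsertion

section HiddenCodebook

variable {L κ X : Type*} {e : L → κ → X} {s : Set L} {n k : ℕ}

/-- The symbol sent for the label `l` under the codebook `g`, when `e l c` is the symbol standing
for `l` with code `c`. The hardness of amplification comes from `g` being unknown. -/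
def encode (e : L → κ → X) (g : L → κ) (l : L) : X := e l (g l)

/-- The symbol `e l c` determines its label `l` and, for labels in `s`, also the code `c`. Labels
outside `s` may carry a fixed symbol, known in advance. -/
def RevealsOn (e : L → κ → X) (s : Set L) : Prop :=
  ∀ ⦃l l' c c'⦄, e l c = e l' c' → l = l' ∧ (l ∈ s → c = c')

/-- The label words of length `k` without repetition that use only labels from `s`. -/
def freshWords (s : Set L) (k : ℕ) : Set (Fin k → L) :=
  {u | Function.Injective u ∧ ∀ i, u i ∈ s}

/-- The symbol words that encode, under the codebook `g`, a label word in `freshWords s k`. -/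
def encodedFreshWords (e : L → κ → X) (s : Set L) (k : ℕ) (g : L → κ) : Set (Fin k → X) :=
  (fun u i => encode e g (u i)) '' freshWords s k

theorem RevealsOn.encode_injective (he : RevealsOn e s) (g : L → κ) :
    Function.Injective (encode e g) :=
  fun _ _ h => (he h).1

theorem exists_notMem_range_of_injective (hnk : n < k) (x : Fin n → L) {u : Fin k → L}
    (hu : Function.Injective u) : ∃ i, u i ∉ Set.range x := by
  by_contra! h
  choose φ hφ using h
  have hφ_inj : Function.Injective φ := fun i j hij => hu (by rw [← hφ, ← hφ, hij])
  exact hnk.not_ge (by simpa using Fintype.card_le_of_injective φ hφ_inj)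

section Measure

variable [MeasurableSpace L] [DiscreteMeasurableSpace L] [MeasurableSpace X]

theorem isProbabilityMeasure_map_encode (ρ : Measure L) [IsProbabilityMeasure ρ]
    (e : L → κ → X) (g : L → κ) : IsProbabilityMeasure (ρ.map (encode e g)) :=
  Measure.isProbabilityMeasure_map (Measurable.of_discrete).aemeasurable

theorem pi_map_encode (ρ : Measure L) [IsProbabilityMeasure ρ] (e : L → κ → X) (g : L → κ)
    (k : ℕ) :
    (Measure.pi fun _ : Fin k => ρ.map (encode e g)) =
      (Measure.pi fun _ : Fin k => ρ).map fun u i => encode e g (u i) := by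
  have := isProbabilityMeasure_map_encode ρ e g
  exact (Measure.pi_map_pi fun _ => (Measurable.of_discrete).aemeasurable).symm

end Measure

section Measurability

variable [Finite L] [MeasurableSpace X] [MeasurableSingletonClass X]

theorem measurableSet_encodedFreshWords (e : L → κ → X) (s : Set L) (k : ℕ) (g : L → κ) :
    MeasurableSet (encodedFreshWords e s k g) :=
  ((Set.toFinite (freshWords s k)).image _).measurableSet

theorem pi_freshWords_le_pi_encodedFreshWords [MeasurableSpace L] [DiscreteMeasurableSpace L]
    (ρ : Measure L) [IsProbabilityMeasure ρ] (e : L → κ → X) (s : Set L) (k : ℕ) (g : L → κ) :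
    (Measure.pi fun _ : Fin k => ρ) (freshWords s k) ≤
      (Measure.pi fun _ : Fin k => ρ.map (encode e g)) (encodedFreshWords e s k g) := by
  rw [pi_map_encode, Measure.map_apply .of_discrete (measurableSet_encodedFreshWords e s k g)]
  exact measure_mono (Set.subset_preimage_image _ _)

end Measurability

section Averaging

variable [AddGroup κ]

/-- The permutation of the codebooks that adds `c` to the code of every label not occurring in
`x`. -/
noncomputable def shiftUnseen (x : Fin n → L) (c : κ) : Equiv.Perm (L → κ) :=
  Equiv.addRight ((Set.range x)ᶜ.indicator fun _ => c)

theorem shiftUnseen_apply_of_notMem (x : Fin n → L) (c : κ) (g : L → κ) {l : L}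
    (hl : l ∉ Set.range x) : shiftUnseen x c g l = g l + c := by
  simp [shiftUnseen, hl]

theorem encode_shiftUnseen (e : L → κ → X) (x : Fin n → L) (c : κ) (g : L → κ) (i : Fin n) :
    encode e (shiftUnseen x c g) (x i) = encode e g (x i) := by
  simp [encode, shiftUnseen]

-- A fresh word longer than `x` has a label not in `x`, at which it displays the shift `c`.
theorem pairwise_disjoint_encodedFreshWords_shiftUnseen (he : RevealsOn e s) (hnk : n < k)
    (x : Fin n → L) (g : L → κ) :
    Pairwise (Function.onFun Disjoint fun c => encodedFreshWords e s k (shiftUnseen x c g)) := by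
  refine fun c c' hcc' => Set.disjoint_left.2 ?_
  rintro _ ⟨u, ⟨hu, hus⟩, rfl⟩ ⟨u', -, h⟩
  obtain ⟨i, hi⟩ := exists_notMem_range_of_injective hnk x hu
  obtain ⟨hlabel, hcode⟩ := he (congrFun h i).symm
  have hshift := hcode (hus i)
  rw [← hlabel, shiftUnseen_apply_of_notMem x c g hi,
    shiftUnseen_apply_of_notMem x c' g hi] at hshift
  exact hcc' (add_left_cancel hshift)

variable [Fintype κ] [MeasurableSpace X] [MeasurableSingletonClass X]

theorem card_mul_sum_encodedFreshWords_le [Fintype L] [DecidableEq L] (he : RevealsOn e s)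
    (hnk : n < k) (ν : (Fin n → X) → Measure (Fin k → X)) [∀ z, IsProbabilityMeasure (ν z)]
    (x : Fin n → L) :
    Fintype.card κ * ∑ g : L → κ, ν (fun i => encode e g (x i)) (encodedFreshWords e s k g) ≤
      Fintype.card (L → κ) := by
  have hshift (c : κ) :
      ∑ g : L → κ, ν (fun i => encode e g (x i)) (encodedFreshWords e s k (shiftUnseen x c g)) =
        ∑ g : L → κ, ν (fun i => encode e g (x i)) (encodedFreshWords e s k g) := by
    simpa only [encode_shiftUnseen] using Equiv.sum_comp (shiftUnseen x c) fun g =>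
      ν (fun i => encode e g (x i)) (encodedFreshWords e s k g)
  calc _ = ∑ c : κ, ∑ g : L → κ, ν (fun i => encode e g (x i))
          (encodedFreshWords e s k (shiftUnseen x c g)) := by
        simp [hshift]
    _ = ∑ g : L → κ, ∑ c : κ, ν (fun i => encode e g (x i))
          (encodedFreshWords e s k (shiftUnseen x c g)) := Finset.sum_comm
    _ ≤ ∑ _g : L → κ, 1 := Finset.sum_le_sum fun g _ =>
        (sum_measure_le_measure_univ
          (fun c _ => (measurableSet_encodedFreshWords e s k _).nullMeasurableSet)
          fun c _ c' _ hcc' => (pairwise_disjoint_encodedFreshWords_shiftUnseen he hnk x g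
            hcc').aedisjoint).trans prob_le_one
    _ = Fintype.card (L → κ) := by simp

theorem exists_bind_encodedFreshWords_le [Finite L] [MeasurableSpace L]
    [DiscreteMeasurableSpace L] (he : RevealsOn e s) (hnk : n < k) (ρ : Measure L)
    [IsProbabilityMeasure ρ] (T : Kernel (Fin n → X) (Fin k → X)) [IsMarkovKernel T] :
    ∃ g : L → κ, ((Measure.pi fun _ : Fin n => ρ.map (encode e g)).bind T)
      (encodedFreshWords e s k g) ≤ (Fintype.card κ : ℝ≥0∞)⁻¹ := by
  classical
  have := Fintype.ofFinite L
  have hκ : (Fintype.card κ : ℝ≥0∞) ≠ 0 := by simp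
  have hbind (g : L → κ) : ((Measure.pi fun _ : Fin n => ρ.map (encode e g)).bind T)
      (encodedFreshWords e s k g) = ∫⁻ x, T (fun i => encode e g (x i))
        (encodedFreshWords e s k g) ∂(Measure.pi fun _ : Fin n => ρ) := by
    have hE := measurableSet_encodedFreshWords e s k g
    rw [Measure.bind_apply hE T.aemeasurable, pi_map_encode,
      lintegral_map (T.measurable_coe hE) .of_discrete]
  have haverage : ∑ g : L → κ, ((Measure.pi fun _ : Fin n => ρ.map (encode e g)).bind T)
      (encodedFreshWords e s k g) ≤ ∑ _g : L → κ, (Fintype.card κ : ℝ≥0∞)⁻¹ := by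
    calc _ = ∫⁻ x, ∑ g : L → κ, T (fun i => encode e g (x i)) (encodedFreshWords e s k g)
            ∂(Measure.pi fun _ : Fin n => ρ) := by
          rw [lintegral_finsetSum _ fun g _ => .of_discrete]
          exact Finset.sum_congr rfl fun g _ => hbind g
      _ ≤ ∫⁻ _, Fintype.card (L → κ) * (Fintype.card κ : ℝ≥0∞)⁻¹
            ∂(Measure.pi fun _ : Fin n => ρ) := by
          refine lintegral_mono fun x => ?_
          rw [← div_eq_mul_inv, ENNReal.le_div_iff_mul_le (.inl hκ) (.inl (by finiteness)),
            mul_comm]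
          exact card_mul_sum_encodedFreshWords_le he hnk T x
      _ = ∑ _g : L → κ, (Fintype.card κ : ℝ≥0∞)⁻¹ := by simp
  by_contra! h
  exact haverage.not_gt (ENNReal.sum_lt_sum_of_nonempty Finset.univ_nonempty fun g _ => h g)

end Averaging

theorem le_ampErr_of_hidden_codebook [AddGroup κ] [Fintype κ] [Finite L] [MeasurableSpace L]
    [DiscreteMeasurableSpace L] [MeasurableSpace X] [MeasurableSingletonClass X] {Θ : Type*}
    {P : Θ → Measure X} [∀ θ, IsProbabilityMeasure (P θ)] (he : RevealsOn e s) (ρ : Measure L)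
    [IsProbabilityMeasure ρ] (hP : ∀ g : L → κ, ∃ θ, P θ = ρ.map (encode e g)) {m : ℕ}
    (hm : 0 < m) :
    (Measure.pi fun _ : Fin (n + m) => ρ).real (freshWords s (n + m)) -
      (Fintype.card κ : ℝ)⁻¹ ≤ ampErr P n m := by
  obtain ⟨θ₀, -⟩ := hP 0
  have : Nonempty X := (P θ₀).nonempty_of_neZero
  refine le_ampErr fun T hT => ?_
  obtain ⟨g, hg⟩ := exists_bind_encodedFreshWords_le he (Nat.lt_add_of_pos_right hm) ρ T
  obtain ⟨θ, hθ⟩ := hP g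
  refine ⟨θ, le_trans ?_ (measureReal_sub_le_tvDist
    (measurableSet_encodedFreshWords e s (n + m) g))⟩
  rw [hθ]
  refine sub_le_sub ?_ ?_
  · exact ENNReal.toReal_mono (by rw [← hθ]; finiteness)
      (pi_freshWords_le_pi_encodedFreshWords ρ e s _ g)
  · simpa [Measure.real] using ENNReal.toReal_mono (by simp) hg

end HiddenCodebook

section DiscreteMeasure

variable {d : ℕ}

theorem discreteMeasure_singleton (p : Fin (d + 1) → ℝ≥0) (a : Fin (d + 1)) :
    discreteMeasure p {a} = p a := by
  simp [discreteMeasure, Set.indicator_apply]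

theorem isProbabilityMeasure_discreteMeasure {p : Fin (d + 1) → ℝ≥0} (hp : ∑ i, p i = 1) :
    IsProbabilityMeasure (discreteMeasure p) where
  measure_univ := by
    simpa [discreteMeasure] using congrArg ((↑) : ℝ≥0 → ℝ≥0∞) hp

instance {t : ℝ≥0} (p : discreteClassTop d t) : IsProbabilityMeasure (discreteMeasure p.1) :=
  isProbabilityMeasure_discreteMeasure p.2.1

theorem exists_discreteMeasure_eq (μ : Measure (Fin (d + 1))) [IsProbabilityMeasure μ] {t : ℝ≥0}
    (hμ : μ {0} = t) : ∃ p : discreteClassTop d t, discreteMeasure p.1 = μ := by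
  have hmass (i : Fin (d + 1)) : ((μ {i}).toNNReal : ℝ≥0∞) = μ {i} :=
    ENNReal.coe_toNNReal (measure_ne_top μ _)
  refine ⟨⟨fun i => (μ {i}).toNNReal, ?_, by simp [hμ]⟩, ?_⟩
  · rw [← ENNReal.coe_inj]
    push_cast
    simp [hmass]
  · simp only [discreteMeasure, hmass]
    simpa [Measure.sum_fintype] using Measure.sum_smul_dirac μ

theorem discreteClassTop_ampErr_le {n : ℕ} {t : ℝ≥0} (ht : 0 < t) :
    ampErr (fun p : discreteClassTop d t => discreteMeasure p.1) n 1 ≤ √((n + 1) * t : ℝ)⁻¹ :=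
  ampErr_one_le_of_atom (a := 0) (by exact_mod_cast ht) fun p => by
    simp [Measure.real, discreteMeasure_singleton, p.2.2]

end DiscreteMeasure

section HeavyUniform

variable {m : ℕ} {t : ℝ≥0}

/-- The probability vector giving mass `t` to `0` and sharing the remaining mass equally among the
`m` other labels. -/
noncomputable def heavyUniform (m : ℕ) (t : ℝ≥0) : Fin (m + 1) → ℝ≥0 :=
  Fin.cons t fun _ => (1 - t) / m

theorem sum_heavyUniform (hm : 0 < m) (ht : t ≤ 1) : ∑ i, heavyUniform m t i = 1 := by
  have hm' : (m : ℝ≥0) ≠ 0 := by positivity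
  simp [heavyUniform, Fin.sum_univ_succ, mul_div_cancel₀ _ hm', add_tsub_cancel_of_le ht]

theorem freshWords_compl_zero (k : ℕ) : freshWords {(0 : Fin (m + 1))}ᶜ k =
    Set.range fun (f : Fin k ↪ Fin m) i => (f i).succ := by
  ext u
  constructor
  · rintro ⟨hu, hu0⟩
    choose f hf using fun i => Fin.exists_succ_eq.2 (hu0 i)
    exact ⟨⟨f, fun i j hij => hu (by rw [← hf, ← hf, hij])⟩, funext hf⟩
  · rintro ⟨f, rfl⟩
    exact ⟨(Fin.succ_injective m).comp f.injective, fun i => Fin.succ_ne_zero _⟩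

theorem pi_heavyUniform_real_freshWords (hm : 0 < m) (ht : t ≤ 1) (k : ℕ) :
    (Measure.pi fun _ : Fin k => discreteMeasure (heavyUniform m t)).real (freshWords {0}ᶜ k) =
      m.descFactorial k * ((1 - t) / m) ^ k := by
  classical
  have := isProbabilityMeasure_discreteMeasure (sum_heavyUniform hm ht)
  have hinj : Function.Injective fun (f : Fin k ↪ Fin m) i => (f i).succ :=
    fun f f' h => by ext i : 1; exact Fin.succ_injective m (congrFun h i)
  have hrange : freshWords {(0 : Fin (m + 1))}ᶜ k =
      ((Finset.univ.map ⟨_, hinj⟩ : Finset (Fin k → Fin (m + 1))) : Set _) := by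
    simp [freshWords_compl_zero]
  rw [hrange, ← sum_measureReal_singleton, Finset.sum_map]
  simp only [Measure.real, Function.Embedding.coeFn_mk, Measure.pi_singleton,
    discreteMeasure_singleton]
  simp [heavyUniform, Fintype.card_embedding_eq, NNReal.coe_sub ht, div_pow]

theorem le_descFactorial_mul_pow {q : ℝ} (hm : 0 < m) (hq0 : 0 ≤ q) (hq1 : q ≤ 1) (k : ℕ) :
    1 - k * (q + k / m) ≤ m.descFactorial k * ((1 - q) / m) ^ k := by
  have hm' : (0 : ℝ) < m := by exact_mod_cast hm
  have hpow : 0 ≤ ((1 - q) / m) ^ k := pow_nonneg (div_nonneg (by linarith) hm'.le) _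
  rcases lt_or_ge m k with hmk | hkm
  · have hk : (1 : ℝ) ≤ k / m := (one_le_div hm').2 (by exact_mod_cast hmk.le)
    have hk1 : (1 : ℝ) ≤ k := by exact_mod_cast hm.trans hmk
    calc 1 - k * (q + k / m) ≤ 0 := by nlinarith
      _ ≤ _ := by positivity
  have hk : (k : ℝ) / m ≤ 1 := (div_le_one hm').2 (by exact_mod_cast hkm)
  have hk0 : (0 : ℝ) ≤ k / m := by positivity
  have hfalling : ((m : ℝ) - k) ^ k ≤ m.descFactorial k := by
    rw [← Nat.cast_sub hkm]
    exact_mod_cast (Nat.pow_le_pow_left (by omega) k).trans (Nat.pow_sub_le_descFactorial m k)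
  calc 1 - k * (q + k / m) ≤ 1 + k * ((1 - q) * (1 - k / m) - 1) := by
        nlinarith [mul_nonneg k.cast_nonneg (mul_nonneg hq0 hk0)]
    _ ≤ (1 + ((1 - q) * (1 - k / m) - 1)) ^ k := one_add_mul_le_pow (by
        nlinarith [mul_nonneg (sub_nonneg.2 hq1) (sub_nonneg.2 hk)]) k
    _ = ((m : ℝ) - k) ^ k * ((1 - q) / m) ^ k := by
        rw [← mul_pow]
        congr 1
        field_simp
        ring
    _ ≤ _ := mul_le_mul_of_nonneg_right hfalling hpow

theorem le_discreteClassTop_ampErr {d K n r : ℕ} [NeZero K] (hm : 0 < m) (hmK : m * K ≤ d)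
    (ht : t ≤ 1) (hr : 0 < r) :
    1 - (n + r : ℕ) * (t + (n + r : ℕ) / m) - (K : ℝ)⁻¹ ≤
      ampErr (fun p : discreteClassTop d t => discreteMeasure p.1) n r := by
  have := isProbabilityMeasure_discreteMeasure (sum_heavyUniform hm ht)
  obtain ⟨f⟩ : Nonempty (Fin m × Fin K ↪ Fin d) :=
    Function.Embedding.nonempty_of_card_le (by simpa using hmK)
  let e : Fin (m + 1) → Fin K → Fin (d + 1) :=
    fun l c => Fin.cases 0 (fun b => (f (b, c)).succ) l
  have he : RevealsOn e {0}ᶜ := by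
    intro l l' c c' h
    cases l using Fin.cases <;> cases l' using Fin.cases <;>
      simp_all [e, Fin.succ_ne_zero, (Fin.succ_ne_zero _).symm]
  have hP (g : Fin (m + 1) → Fin K) : ∃ p : discreteClassTop d t,
      discreteMeasure p.1 = (discreteMeasure (heavyUniform m t)).map (encode e g) := by
    have := isProbabilityMeasure_map_encode (discreteMeasure (heavyUniform m t)) e g
    apply exists_discreteMeasure_eq
    have hpre : encode e g ⁻¹' {0} = {0} := by
      ext l
      exact (he.encode_injective g).eq_iff' rfl
    rw [Measure.map_apply .of_discrete (measurableSet_singleton 0), hpre,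
      discreteMeasure_singleton]
    rfl
  refine le_trans ?_ (le_ampErr_of_hidden_codebook he _ hP hr)
  rw [pi_heavyUniform_real_freshWords hm ht, Fintype.card_fin]
  gcongr
  exact le_descFactorial_mul_pow hm t.2 (by exact_mod_cast ht) _

end HeavyUniform

theorem sq_le_of_le_div_of_inv_sqrt_le {c d t x : ℝ} (hc : 0 ≤ c) (hd : 0 < d) (hx : 0 ≤ x)
    (htd : 1 / (2 * √d) ≤ t) (hxt : x ≤ c / t) : x ^ 2 ≤ (2 * c) ^ 2 * d := by
  have hsqrt : x ≤ 2 * c * √d :=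
    calc x ≤ c / t := hxt
      _ ≤ c / (1 / (2 * √d)) := by gcongr
      _ = 2 * c * √d := by field_simp
  calc x ^ 2 ≤ (2 * c * √d) ^ 2 := by gcongr
    _ = (2 * c) ^ 2 * d := by rw [mul_pow, Real.sq_sqrt hd.le]

-- With `m = d / 100` labels and `100` codes each, `n ≤ 1 / (100 t)` forces `n² ≤ d / 2500`, so both
-- the heavy symbol and repeated labels are rare among `n + 1` samples.
theorem one_half_le_discreteClassTop_ampErr {d n : ℕ} {t : ℝ≥0} (hd : 1 ≤ d) (hn : 1 ≤ n)
    (htd : 1 / (2 * √d) ≤ (t : ℝ)) (ht1 : t ≤ 1) (hnt : (n : ℝ) ≤ 1 / 100 / t) :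
    1 / 2 ≤ ampErr (fun p : discreteClassTop d t => discreteMeasure p.1) n 1 := by
  have hd0 : (0 : ℝ) < d := by exact_mod_cast hd
  have hn1 : (1 : ℝ) ≤ n := by exact_mod_cast hn
  have ht0 : (0 : ℝ) < t := htd.trans_lt' (by positivity)
  have hsq : (n : ℝ) ^ 2 ≤ d / 2500 := by
    linarith [sq_le_of_le_div_of_inv_sqrt_le (by norm_num) hd0 (by positivity) htd hnt]
  have hd_large : 100 ≤ d := by
    have : (100 : ℝ) ≤ d := by nlinarith
    exact_mod_cast this
  obtain ⟨m, hm, hmd, hdm⟩ : ∃ m, 0 < m ∧ m * 100 ≤ d ∧ d ≤ 200 * m :=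
    ⟨d / 100, by omega, by omega, by omega⟩
  have hm0 : (0 : ℝ) < m := by exact_mod_cast hm
  have hdm' : (d : ℝ) ≤ 200 * m := by exact_mod_cast hdm
  have hheavy : (n + 1 : ℝ) * t ≤ 0.02 := by
    rw [le_div_iff₀ ht0] at hnt
    nlinarith
  have hrepeat : (n + 1 : ℝ) * ((n + 1) / m) ≤ 0.32 := by
    rw [← mul_div_assoc, div_le_iff₀ hm0]
    nlinarith
  have hbound := le_discreteClassTop_ampErr (K := 100) (n := n) hm hmd ht1 one_pos
  rw [mul_add] at hbound
  push_cast at hbound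
  linarith

theorem discreteClassTop_ampErr_le_tenth {d n : ℕ} {t : ℝ≥0} (ht : 0 < t)
    (hn : 100 / (t : ℝ) ≤ n) :
    ampErr (fun p : discreteClassTop d t => discreteMeasure p.1) n 1 ≤ 0.1 := by
  have ht' : (0 : ℝ) < t := by exact_mod_cast ht
  have hcount : 100 ≤ (n + 1) * (t : ℝ) := by
    rw [div_le_iff₀ ht'] at hn
    linarith
  refine (discreteClassTop_ampErr_le ht).trans (Real.sqrt_le_iff.2 ⟨by norm_num, ?_⟩)
  exact (inv_anti₀ (by norm_num) hcount).trans_eq (by norm_num)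

theorem discreteClassTop_amplification_complexity_general :
    ∃ c C : ℝ, 0 < c ∧ 0 < C ∧
      ∀ (d : ℕ) (t : ℝ≥0) (n : ℕ), 1 ≤ d → 1 ≤ n →
        1 / (2 * Real.sqrt d) ≤ (t : ℝ) → (t : ℝ) ≤ 1 →
        ((C / (t : ℝ) ≤ (n : ℝ) →
            ampErr (fun p : discreteClassTop d t => discreteMeasure p.1) n 1 ≤ 0.1) ∧
          ((n : ℝ) ≤ c / (t : ℝ) →
            1 / 2 ≤ ampErr (fun p : discreteClassTop d t => discreteMeasure p.1) n 1)) := by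
  refine ⟨1 / 100, 100, by norm_num, by norm_num, fun d t n hd hn htd ht1 => ⟨?_, ?_⟩⟩
  · have : (0 : ℝ) < d := by exact_mod_cast hd
    have ht0 : (0 : ℝ) < t := htd.trans_lt' (by positivity)
    exact discreteClassTop_ampErr_le_tenth (by exact_mod_cast ht0)
  · exact one_half_le_discreteClassTop_ampErr hd hn htd (by exact_mod_cast ht1)

/-- Sample amplification with a known heavy symbol.
There are absolute constants `c, C > 0` such that for all `d` divisible by `100`,
all `t ∈ [1/(2√d), 1/2]` and all `n ≥ 1`:
(i) if `n ≥ C/t` then `ε*(𝒫_{d,t}, n, 1) ≤ 0.1`, and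
(ii) if `n ≤ c/t` then `ε*(𝒫_{d,t}, n, 1) ≥ 1/2`.
In particular an `(n, n+1)` amplification with error `0.1` is possible iff `n = Θ(1/t)`. -/
theorem discreteClassTop_amplification_complexity :
    ∃ c C : ℝ, 0 < c ∧ 0 < C ∧
      ∀ (d : ℕ) (t : ℝ≥0) (n : ℕ), 100 ∣ d → 1 ≤ d → 1 ≤ n →
        1 / (2 * Real.sqrt d) ≤ (t : ℝ) → (t : ℝ) ≤ 1 / 2 →
        ((C / (t : ℝ) ≤ (n : ℝ) →
            ampErr (fun p : discreteClassTop d t => discreteMeasure p.1) n 1 ≤ 0.1) ∧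
          ((n : ℝ) ≤ c / (t : ℝ) →
            1 / 2 ≤ ampErr (fun p : discreteClassTop d t => discreteMeasure p.1) n 1)) := by
  obtain ⟨c, C, hc, hC, h⟩ := discreteClassTop_amplification_complexity_general
  exact ⟨c, C, hc, hC, fun d t n _ hd hn htd ht => h d t n hd hn htd (by linarith)⟩
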